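/- arXiv:2307.11911 — 6 statements merged into one kernel-verified Lean document; each statement's English description precedes it below -/
import Mathlib

section
/- Let N ≥ 2, let ρ₁,…,ρ_N be positive real numbers with ρ = ρ₁ + ⋯ + ρ_N, and let V₁,…,V_N be vectors in a real inner product space E. Define F_i := ρ_i·V_i − (ρ_i/ρ)·Σ_{j=1}^N ρ_j·V_j, and define for i = 1,…,N and j = 1,…,N−1 the coefficients b_{i,j} := −(ρ_i/ρ)·Σ_{k=1}^{j} ρ_k if j < i, and b_{i,j} := (ρ_i/ρ)·Σ_{k=j+1}^{N} ρ_k if j ≥ i. Then for every i = 1,…,N one has F_i = Σ_{j=1}^{N−1} b_{i,j}·(V_j − V_{j+1}). -/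
/-!
Every difference `V i - V k` telescopes into consecutive differences. Starting from `V 0`,
the weighted sum `∑ k, ρ k • (V 0 - V k)` therefore carries the tail sum `∑_{k > j} ρ k` on the
`j`-th difference, and moving the base point from `V 0` to `V i` subtracts the total `∑ k, ρ k` from
the coefficients with `j < i`, which turns these tail sums into negated head sums. The flux `F i` is
`ρ i / ∑ k, ρ k` times the resulting expression for `(∑ k, ρ k) • V i - ∑ k, ρ k • V k`.
-/

section Telescoping

variable {M : Type*} [AddCommGroup M] {n : ℕ}

theorem sum_filter_castSucc_lt_sub_succ (f : Fin (n + 1) → M) (k : Fin (n + 1)) :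
    ∑ j : Fin n with j.castSucc < k, (f j.castSucc - f j.succ) = f 0 - f k := by
  cases k using Fin.cases with
  | zero => simp
  | succ k =>
    simp_rw [Fin.castSucc_lt_succ_iff, Finset.filter_ge_eq_Iic, ← neg_sub (f (Fin.succ _)),
      Finset.sum_neg_distrib, Fin.sum_Iic_sub]

variable {R : Type*} [Ring R] [Module R M]

theorem sum_smul_zero_sub_eq_sum_sum_lt_smul_sub (a : Fin (n + 1) → R) (f : Fin (n + 1) → M) :
    ∑ k, a k • (f 0 - f k) =
      ∑ j : Fin n, (∑ k with j.castSucc < k, a k) • (f j.castSucc - f j.succ) := by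
  simp_rw [← sum_filter_castSucc_lt_sub_succ f, Finset.smul_sum, Finset.sum_smul,
    Finset.sum_filter]
  exact Finset.sum_comm

theorem sum_smul_sub_sum_smul_eq_sum_ite_smul_sub (a : Fin (n + 1) → R) (f : Fin (n + 1) → M)
    (i : Fin (n + 1)) :
    (∑ k, a k) • f i - ∑ k, a k • f k =
      ∑ j : Fin n, (if j.castSucc < i then -∑ k with k ≤ j.castSucc, a k
        else ∑ k with j.castSucc < k, a k) • (f j.castSucc - f j.succ) := by
  have tail_sub_total (j : Fin n) :
      (∑ k with j.castSucc < k, a k) - ∑ k, a k = -∑ k with k ≤ j.castSucc, a k := by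
    rw [← Finset.sum_filter_add_sum_filter_not Finset.univ (· ≤ j.castSucc) a]
    simp only [not_le, sub_add_cancel_right]
  calc (∑ k, a k) • f i - ∑ k, a k • f k
      = ∑ k, a k • (f 0 - f k) - (∑ k, a k) • (f 0 - f i) := by
        simp only [smul_sub, Finset.sum_sub_distrib, Finset.sum_smul]
        abel
    _ = ∑ j : Fin n, ((∑ k with j.castSucc < k, a k) • (f j.castSucc - f j.succ) -
          if j.castSucc < i then (∑ k, a k) • (f j.castSucc - f j.succ) else 0) := by
        rw [sum_smul_zero_sub_eq_sum_sum_lt_smul_sub, ← sum_filter_castSucc_lt_sub_succ f i,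
          Finset.smul_sum, Finset.sum_filter, ← Finset.sum_sub_distrib]
    _ = _ := by
        refine Finset.sum_congr rfl fun j _ => ?_
        split_ifs
        · rw [← sub_smul, tail_sub_total]
        · rw [sub_zero]

end Telescoping

theorem stmt_3_general {K E : Type*} [DivisionRing K] [AddCommGroup E] [Module K E] {n : ℕ}
    (ρ : Fin (n + 1) → K) (hρ : ∑ k, ρ k ≠ 0) (V F : Fin (n + 1) → E)
    (hF : ∀ i, F i = ρ i • V i - (ρ i / ∑ j, ρ j) • ∑ j, ρ j • V j)
    (b : Fin (n + 1) → Fin n → K)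
    (hb : ∀ i j, b i j =
      if j.castSucc < i then -(ρ i / ∑ k, ρ k) * ∑ k with k ≤ j.castSucc, ρ k
      else (ρ i / ∑ k, ρ k) * ∑ k with j.castSucc < k, ρ k)
    (i : Fin (n + 1)) :
    F i = ∑ j, b i j • (V j.castSucc - V j.succ) := by
  calc F i = (ρ i / ∑ k, ρ k) • ((∑ k, ρ k) • V i - ∑ k, ρ k • V k) := by
        rw [hF, smul_sub, smul_smul, div_mul_cancel₀ _ hρ]
    _ = ∑ j, b i j • (V j.castSucc - V j.succ) := by
        rw [sum_smul_sub_sum_smul_eq_sum_ite_smul_sub, Finset.smul_sum]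
        simp only [hb, smul_smul, mul_ite, mul_neg, neg_mul]

/-- With N = n+1 ≥ 2 positive densities ρᵢ, total ρ, and vectors Vⱼ, the fluxes
Fᵢ := ρᵢ·Vᵢ − (ρᵢ/ρ)·Σⱼ ρⱼ·Vⱼ can be written as Fᵢ = Σ_{j=1}^{N−1} bᵢⱼ·(Vⱼ − V_{j+1}),
where bᵢⱼ = −(ρᵢ/ρ)·Σ_{k≤j} ρ_k if j < i and bᵢⱼ = (ρᵢ/ρ)·Σ_{k≥j+1} ρ_k if j ≥ i
(indices 1-based in the informal statement; here i : Fin (n+1), j : Fin n, 0-based). -/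
theorem stmt_3 {E : Type*} [NormedAddCommGroup E] [InnerProductSpace ℝ E]
    (n : ℕ) (hn : 1 ≤ n)
    (ρ : Fin (n+1) → ℝ) (hρ : ∀ i, 0 < ρ i) (V : Fin (n+1) → E)
    (F : Fin (n+1) → E)
    (hF : ∀ i, F i = ρ i • V i - (ρ i / ∑ j, ρ j) • ∑ j, ρ j • V j)
    (b : Fin (n+1) → Fin n → ℝ)
    (hb : ∀ i j, b i j =
      if (j : ℕ) < (i : ℕ) then
        -(ρ i / ∑ k, ρ k) * ∑ k ∈ Finset.univ.filter (fun k : Fin (n+1) => (k : ℕ) ≤ (j : ℕ)), ρ k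
      else
        (ρ i / ∑ k, ρ k) * ∑ k ∈ Finset.univ.filter (fun k : Fin (n+1) => (j : ℕ) < (k : ℕ)), ρ k) :
    ∀ i, F i = ∑ j, b i j • (V j.castSucc - V j.succ) := by
  have hsum : ∑ k, ρ k ≠ 0 := (Finset.sum_pos (fun k _ => hρ k) Finset.univ_nonempty).ne'
  exact stmt_3_general ρ hsum V F hF b hb
end

section
/- Let N ≥ 2 and let ρ₁,…,ρ_N be positive real numbers with ρ = ρ₁ + ⋯ + ρ_N. Let B be the (N−1)×(N−1) real matrix with entries b_{i,j} := −(ρ_i/ρ)·Σ_{k=1}^{j} ρ_k if j < i, and b_{i,j} := (ρ_i/ρ)·Σ_{k=j+1}^{N} ρ_k if j ≥ i, for i, j = 1,…,N−1. Then det B = (ρ₁·ρ₂·⋯·ρ_N)/ρ. In particular B is invertible whenever all ρ_i are positive. -/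
/-!
With indices running from `1`, each entry is `ρ i * (ζ i j - s j)`, where `ζ` is the upper
triangular matrix of ones and `s j` is the share of the first `j` densities in the total. The last
column of `ζ` is constantly `1`, so subtracting `s j` from the `j`-th column subtracts `s j` times
that last column and multiplies `det ζ = 1` by `1 - s (N - 1)`, the share of the last density.
-/

open Matrix

section Determinant

variable {ι R : Type*}

theorem det_sub_vecMulVec_col [Fintype ι] [DecidableEq ι] [CommRing R]
    (A : Matrix ι ι R) (k : ι) (s : ι → R) :
    (A - vecMulVec (A.col k) s).det = A.det * (1 - s k) := by
  have hfactor : A - vecMulVec (A.col k) s = A * (1 + vecMulVec (-Pi.single k 1) s) := by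
    rw [Matrix.mul_add, Matrix.mul_one, mul_vecMulVec, mulVec_neg, mulVec_single_one,
      neg_vecMulVec, sub_eq_add_neg]
  rw [hfactor, det_mul, vecMulVec_eq Unit, det_one_add_replicateCol_mul_replicateRow,
    dotProduct_neg, dotProduct_single_one, sub_eq_add_neg]

variable (ι R) in
/-- The matrix of the zeta function of the order on `ι`, whose entry at `(i, j)` is `1` if `i ≤ j`
and `0` otherwise; for `ι = Fin n` it is the upper triangular matrix of ones. -/
def orderZetaMatrix [LE ι] [DecidableLE ι] [Zero R] [One R] : Matrix ι ι R :=
  of fun i j => if i ≤ j then 1 else 0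

theorem orderZetaMatrix_col_top [LE ι] [DecidableLE ι] [OrderTop ι] [Zero R] [One R] :
    (orderZetaMatrix ι R).col ⊤ = 1 := by
  ext i
  simp [orderZetaMatrix]

variable [Fintype ι] [LinearOrder ι] [CommRing R]

theorem det_orderZetaMatrix : (orderZetaMatrix ι R).det = 1 := by
  have hupper : (orderZetaMatrix ι R).IsUpperTriangular := fun i j hij => if_neg (not_le.mpr hij)
  rw [det_of_isUpperTriangular hupper]
  simp [orderZetaMatrix]

theorem det_orderZetaMatrix_sub_vecMulVec_one [OrderTop ι] (s : ι → R) :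
    (orderZetaMatrix ι R - vecMulVec 1 s).det = 1 - s ⊤ := by
  rw [← orderZetaMatrix_col_top, det_sub_vecMulVec_col, det_orderZetaMatrix, one_mul]

end Determinant

section Diffusion

variable {K : Type*} [Field K] {n : ℕ}

/-- The share of the components `0, …, j` in the total density. -/
def cumulativeShare (ρ : Fin (n + 1) → K) (j : Fin n) : K :=
  (∑ k : Fin (n + 1) with k.val ≤ j.val, ρ k) / ∑ k, ρ k

/-- The matrix expressing the diffusion fluxes of an `n + 1`-component mixture with densities `ρ`
through the gradients of the `n` difference variables. With indices starting at `0`, the sum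
`ρ₁ + ⋯ + ρⱼ` of the usual numbering runs over `k ≤ j`. -/
def diffusionMatrix (ρ : Fin (n + 1) → K) : Matrix (Fin n) (Fin n) K :=
  of fun i j =>
    if j.val < i.val then
      -(ρ i.castSucc / ∑ k, ρ k) * ∑ k : Fin (n + 1) with k.val ≤ j.val, ρ k
    else
      (ρ i.castSucc / ∑ k, ρ k) * ∑ k : Fin (n + 1) with j.val < k.val, ρ k

theorem one_sub_cumulativeShare {ρ : Fin (n + 1) → K} (hρ : ∑ k, ρ k ≠ 0) (j : Fin n) :
    1 - cumulativeShare ρ j = (∑ k : Fin (n + 1) with j.val < k.val, ρ k) / ∑ k, ρ k := by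
  have hsplit := Finset.sum_filter_add_sum_filter_not Finset.univ
    (fun k : Fin (n + 1) => k.val ≤ j.val) ρ
  simp only [not_le] at hsplit
  rw [cumulativeShare, one_sub_div hρ, ← eq_sub_of_add_eq' hsplit]

theorem one_sub_cumulativeShare_last {ρ : Fin (n + 2) → K} (hρ : ∑ k, ρ k ≠ 0) :
    1 - cumulativeShare ρ (Fin.last n) = ρ (Fin.last (n + 1)) / ∑ k, ρ k := by
  have htail : ({k | (Fin.last n).val < k.val} : Finset (Fin (n + 2))) = {Fin.last (n + 1)} := by
    ext k
    simp only [Finset.mem_filter_univ, Finset.mem_singleton, Fin.ext_iff, Fin.val_last]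
    omega
  rw [one_sub_cumulativeShare hρ, htail, Finset.sum_singleton]

theorem diffusionMatrix_eq_diagonal_mul {ρ : Fin (n + 1) → K} (hρ : ∑ k, ρ k ≠ 0) :
    diffusionMatrix ρ = diagonal (fun i => ρ i.castSucc) *
      (orderZetaMatrix (Fin n) K - vecMulVec 1 (cumulativeShare ρ)) := by
  ext i j
  rw [diagonal_mul, Matrix.sub_apply, vecMulVec_apply, Pi.one_apply, one_mul]
  rcases lt_or_ge j i with hji | hij
  · have hzeta : orderZetaMatrix (Fin n) K i j = 0 := if_neg hji.not_ge
    rw [hzeta, zero_sub, diffusionMatrix, of_apply, if_pos (Fin.lt_def.mp hji), cumulativeShare]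
    ring
  · have hzeta : orderZetaMatrix (Fin n) K i j = 1 := if_pos hij
    rw [hzeta, one_sub_cumulativeShare hρ, diffusionMatrix, of_apply,
      if_neg (Fin.le_def.mp hij).not_gt]
    ring

theorem det_diffusionMatrix {ρ : Fin (n + 1) → K} (hρ : ∑ k, ρ k ≠ 0) :
    (diffusionMatrix ρ).det = (∏ i, ρ i) / ∑ i, ρ i := by
  cases n with
  | zero =>
    rw [Fin.sum_univ_one] at hρ
    simp [hρ]
  | succ m =>
    rw [diffusionMatrix_eq_diagonal_mul hρ, det_mul, det_diagonal,
      det_orderZetaMatrix_sub_vecMulVec_one, Fin.top_eq_last, one_sub_cumulativeShare_last hρ,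
      Fin.prod_univ_castSucc ρ, mul_div_assoc]

theorem stmt_4_general {ρ : Fin (n + 1) → K} (hρ : ∑ k, ρ k ≠ 0) :
    (diffusionMatrix ρ).det = (∏ i, ρ i) / ∑ i, ρ i ∧
      (IsUnit (diffusionMatrix ρ).det ↔ ∀ i, ρ i ≠ 0) := by
  refine ⟨det_diffusionMatrix hρ, ?_⟩
  rw [det_diffusionMatrix hρ, isUnit_iff_ne_zero, div_ne_zero_iff, and_iff_left hρ]
  simp only [Finset.prod_ne_zero_iff, Finset.mem_univ, true_imp_iff]

end Diffusion

/-- For N = n+1 ≥ 2 positive densities ρᵢ with total ρ, the (N−1)×(N−1) matrix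
B with Bᵢⱼ = −(ρᵢ/ρ)·Σ_{k≤j} ρ_k if j < i and Bᵢⱼ = (ρᵢ/ρ)·Σ_{k≥j+1} ρ_k if j ≥ i
has determinant det B = (ρ₁⋯ρ_N)/ρ; in particular B is invertible. -/
theorem stmt_4 (n : ℕ) (hn : 1 ≤ n)
    (ρ : Fin (n+1) → ℝ) (hρ : ∀ i, 0 < ρ i)
    (B : Matrix (Fin n) (Fin n) ℝ)
    (hB : ∀ i j, B i j =
      if (j : ℕ) < (i : ℕ) then
        -(ρ i.castSucc / ∑ k, ρ k) *
          ∑ k ∈ Finset.univ.filter (fun k : Fin (n+1) => (k : ℕ) ≤ (j : ℕ)), ρ k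
      else
        (ρ i.castSucc / ∑ k, ρ k) *
          ∑ k ∈ Finset.univ.filter (fun k : Fin (n+1) => (j : ℕ) < (k : ℕ)), ρ k) :
    B.det = (∏ i, ρ i) / (∑ i, ρ i) ∧ IsUnit B.det := by
  obtain rfl : B = diffusionMatrix ρ := Matrix.ext hB
  exact (stmt_4_general (Finset.sum_pos (fun i _ => hρ i) Finset.univ_nonempty).ne').imp_right
    fun hunit => hunit.mpr fun i => (hρ i).ne'
end

section
/- Let N ≥ 2 and let 0 < c ≤ M be real numbers. There exists a constant C > 0, depending only on N, c and M, with the following property: for all positive reals ρ₁,…,ρ_N satisfying ρ_i ≥ c for every i and ρ := ρ₁ + ⋯ + ρ_N ≤ M, and for all vectors W₁,…,W_{N−1} in a real inner product space E, one has Σ_{j=1}^{N−1} ‖W_j‖² ≤ C·Σ_{i=1}^{N−1} ‖Σ_{j=1}^{N−1} b_{i,j}·W_j‖², where b_{i,j} := −(ρ_i/ρ)·Σ_{k=1}^{j} ρ_k if j < i, and b_{i,j} := (ρ_i/ρ)·Σ_{k=j+1}^{N} ρ_k if j ≥ i. -/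
/-!
Put `S i = W 0 + ⋯ + W (i - 1)` and let `m` be the mean of `S` with weights `ρ`. The `i`-th flux
`∑ j, b i j • W j` equals `ρ i • (m - S i)`, and this formula also defines a flux of the last
species. All `n + 1` fluxes add up to zero, so the first `n` control the last one. As `ρ` is bounded
below, they control every `m - S i`, and `W j` is the difference of two consecutive ones.
-/

section Algebra

/-- The coefficients `b i j` that express the fluxes of the first `n` of `n + 1` species with
densities `ρ` through `n` gradients. Indices start at `0`; the omitted flux is that of the last
species. -/
def fluxMatrix {K : Type*} [Field K] {n : ℕ} (ρ : Fin (n + 1) → K) : Matrix (Fin n) (Fin n) K :=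
  .of fun i j =>
    if j < i then -(ρ i.castSucc / ∑ k, ρ k) * ∑ k with k ≤ j.castSucc, ρ k
    else (ρ i.castSucc / ∑ k, ρ k) * ∑ k with j.castSucc < k, ρ k

theorem partialSum_eq_sum_filter {M : Type*} [AddCommMonoid M] {n : ℕ} (f : Fin n → M)
    (i : Fin (n + 1)) : Fin.partialSum f i = ∑ j with j.castSucc < i, f j := by
  induction i using Fin.induction with
  | zero => simp
  | succ i ih =>
    have filter_succ : ({j | j.castSucc < i.succ} : Finset (Fin n)) =
        insert i ({j | j.castSucc < i.castSucc} : Finset (Fin n)) := by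
      ext j
      simp [le_iff_eq_or_lt]
    rw [Fin.partialSum_succ, ih, filter_succ, Finset.sum_insert (by simp), add_comm]

variable {K E : Type*} [Field K] [AddCommGroup E] [Module K E]

theorem sum_smul_centerMass_sub {ι : Type*} {s : Finset ι} {w : ι → K} (hw : ∑ i ∈ s, w i ≠ 0)
    (z : ι → E) : ∑ i ∈ s, w i • (s.centerMass w z - z i) = 0 := by
  simp only [smul_sub, Finset.sum_sub_distrib, ← Finset.sum_smul]
  rw [Finset.centerMass, smul_inv_smul₀ hw, sub_self]

variable {n : ℕ}

theorem centerMass_partialSum (ρ : Fin (n + 1) → K) (W : Fin n → E) :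
    Finset.univ.centerMass ρ (Fin.partialSum W) =
      ∑ j, ((∑ k, ρ k)⁻¹ * ∑ k with j.castSucc < k, ρ k) • W j := by
  simp only [Finset.centerMass, partialSum_eq_sum_filter, mul_smul, Finset.sum_smul,
    Finset.sum_filter, Finset.smul_sum, smul_ite, smul_zero, ite_smul, zero_smul]
  rw [Finset.sum_comm]

theorem fluxMatrix_apply_eq_mul_sub {ρ : Fin (n + 1) → K} (hρ : ∑ k, ρ k ≠ 0) (i j : Fin n) :
    fluxMatrix ρ i j = ρ i.castSucc *
      ((∑ k, ρ k)⁻¹ * ∑ k with j.castSucc < k, ρ k - if j < i then 1 else 0) := by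
  have sum_split : ∑ k with k ≤ j.castSucc, ρ k + ∑ k with j.castSucc < k, ρ k = ∑ k, ρ k := by
    simpa only [not_le] using
      Finset.sum_filter_add_sum_filter_not Finset.univ (· ≤ j.castSucc) ρ
  rw [fluxMatrix, Matrix.of_apply]
  split_ifs
  · rw [eq_sub_of_add_eq sum_split]
    field_simp
    ring
  · ring

theorem sum_fluxMatrix_smul {ρ : Fin (n + 1) → K} (hρ : ∑ k, ρ k ≠ 0) (W : Fin n → E)
    (i : Fin n) :
    ∑ j, fluxMatrix ρ i j • W j = ρ i.castSucc •
      (Finset.univ.centerMass ρ (Fin.partialSum W) - Fin.partialSum W i.castSucc) := by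
  simp only [fluxMatrix_apply_eq_mul_sub hρ, centerMass_partialSum, partialSum_eq_sum_filter,
    Fin.castSucc_lt_castSucc_iff, Finset.sum_filter, mul_smul, sub_smul, ite_smul, one_smul,
    zero_smul, ← Finset.smul_sum, Finset.sum_sub_distrib]

end Algebra

section Norm

theorem sum_norm_succ_sub_castSucc_sq_le {E : Type*} [SeminormedAddCommGroup E] {n : ℕ}
    (v : Fin (n + 1) → E) :
    ∑ j : Fin n, ‖v j.succ - v j.castSucc‖ ^ 2 ≤ 4 * ∑ i, ‖v i‖ ^ 2 := by
  have norm_sub_sq_le (a b : E) : ‖a - b‖ ^ 2 ≤ 2 * (‖a‖ ^ 2 + ‖b‖ ^ 2) :=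
    (pow_le_pow_left₀ (norm_nonneg _) (norm_sub_le a b) 2).trans add_sq_le
  have sum_succ_le : ∑ j : Fin n, ‖v j.succ‖ ^ 2 ≤ ∑ i, ‖v i‖ ^ 2 := by
    rw [Fin.sum_univ_succ]
    exact le_add_of_nonneg_left (sq_nonneg _)
  have sum_castSucc_le : ∑ j : Fin n, ‖v j.castSucc‖ ^ 2 ≤ ∑ i, ‖v i‖ ^ 2 := by
    rw [Fin.sum_univ_castSucc]
    exact le_add_of_nonneg_right (sq_nonneg _)
  calc ∑ j : Fin n, ‖v j.succ - v j.castSucc‖ ^ 2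
      ≤ ∑ j : Fin n, 2 * (‖v j.succ‖ ^ 2 + ‖v j.castSucc‖ ^ 2) :=
        Finset.sum_le_sum fun j _ => norm_sub_sq_le _ _
    _ = 2 * (∑ j : Fin n, ‖v j.succ‖ ^ 2 + ∑ j : Fin n, ‖v j.castSucc‖ ^ 2) := by
        rw [← Finset.mul_sum, Finset.sum_add_distrib]
    _ ≤ 4 * ∑ i, ‖v i‖ ^ 2 := by linarith

theorem sum_norm_sq_le_of_sum_eq_zero {E : Type*} [SeminormedAddCommGroup E] {n : ℕ}
    {x : Fin (n + 1) → E} (hx : ∑ i, x i = 0) :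
    ∑ i, ‖x i‖ ^ 2 ≤ (n + 1) * ∑ i : Fin n, ‖x i.castSucc‖ ^ 2 := by
  rw [Fin.sum_univ_castSucc] at hx ⊢
  have norm_last_le : ‖x (Fin.last n)‖ ≤ ∑ i : Fin n, ‖x i.castSucc‖ := by
    rw [eq_neg_of_add_eq_zero_right hx, norm_neg]
    exact norm_sum_le _ _
  have norm_last_sq_le : ‖x (Fin.last n)‖ ^ 2 ≤ n * ∑ i : Fin n, ‖x i.castSucc‖ ^ 2 :=
    calc ‖x (Fin.last n)‖ ^ 2 ≤ (∑ i : Fin n, ‖x i.castSucc‖) ^ 2 := by gcongr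
      _ ≤ n * ∑ i : Fin n, ‖x i.castSucc‖ ^ 2 := by
        simpa using
          sq_sum_le_card_mul_sum_sq (s := Finset.univ) (f := fun i : Fin n => ‖x i.castSucc‖)
  linarith

theorem sum_norm_sq_le_sum_norm_smul_sq {𝕜 E ι : Type*} [NormedField 𝕜]
    [SeminormedAddCommGroup E] [NormedSpace 𝕜 E] {c : ℝ} (hc : 0 < c) {s : Finset ι} {w : ι → 𝕜}
    (hw : ∀ i ∈ s, c ≤ ‖w i‖) (v : ι → E) :
    ∑ i ∈ s, ‖v i‖ ^ 2 ≤ (∑ i ∈ s, ‖w i • v i‖ ^ 2) / c ^ 2 := by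
  rw [le_div_iff₀ (by positivity), Finset.sum_mul]
  refine Finset.sum_le_sum fun i hi => ?_
  rw [norm_smul, mul_pow, mul_comm]
  gcongr
  exact hw i hi

theorem stmt_5_general {𝕜 E : Type*} [NormedField 𝕜] [SeminormedAddCommGroup E] [NormedSpace 𝕜 E]
    {n : ℕ} {c : ℝ} (hc : 0 < c) {ρ : Fin (n + 1) → 𝕜} (hcρ : ∀ i, c ≤ ‖ρ i‖)
    (hρ : ∑ i, ρ i ≠ 0) (W : Fin n → E) :
    ∑ j, ‖W j‖ ^ 2 ≤ 4 * (n + 1) / c ^ 2 * ∑ i, ‖∑ j, fluxMatrix ρ i j • W j‖ ^ 2 := by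
  let S := Fin.partialSum W
  let v i := Finset.univ.centerMass ρ S - S i
  have norm_W (j : Fin n) : ‖W j‖ = ‖v j.succ - v j.castSucc‖ := by
    simp [v, S, Fin.partialSum_succ]
  calc ∑ j, ‖W j‖ ^ 2
      = ∑ j : Fin n, ‖v j.succ - v j.castSucc‖ ^ 2 := by simp only [norm_W]
    _ ≤ 4 * ∑ i, ‖v i‖ ^ 2 := sum_norm_succ_sub_castSucc_sq_le v
    _ ≤ 4 * ((∑ i, ‖ρ i • v i‖ ^ 2) / c ^ 2) := by
        gcongr
        exact sum_norm_sq_le_sum_norm_smul_sq hc (fun i _ => hcρ i) v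
    _ ≤ 4 * (((n + 1) * ∑ i : Fin n, ‖ρ i.castSucc • v i.castSucc‖ ^ 2) / c ^ 2) := by
        gcongr
        exact sum_norm_sq_le_of_sum_eq_zero (sum_smul_centerMass_sub hρ S)
    _ = 4 * (n + 1) / c ^ 2 * ∑ i, ‖∑ j, fluxMatrix ρ i j • W j‖ ^ 2 := by
        simp only [sum_fluxMatrix_smul hρ, v, S]
        ring

end Norm

/-- For N = n+1 ≥ 2 and 0 < c ≤ M there is C > 0, depending only on n, c, M,
such that for all densities with ρᵢ ≥ c and Σρᵢ ≤ M and all vectors W₁,…,W_{N−1} in a real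
inner product space, Σⱼ ‖Wⱼ‖² ≤ C·Σᵢ ‖Σⱼ bᵢⱼ·Wⱼ‖², where b is the flux coefficient matrix. -/
theorem stmt_5 (n : ℕ) (hn : 1 ≤ n) (c M : ℝ) (hc : 0 < c) (hcM : c ≤ M) :
    ∃ C > 0, ∀ (E : Type) [NormedAddCommGroup E] [InnerProductSpace ℝ E],
      ∀ (ρ : Fin (n+1) → ℝ), (∀ i, c ≤ ρ i) → (∑ i, ρ i) ≤ M →
      ∀ W : Fin n → E,
        ∑ j, ‖W j‖ ^ 2 ≤
          C * ∑ i : Fin n, ‖∑ j : Fin n,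
            (if (j : ℕ) < (i : ℕ) then
              -(ρ i.castSucc / ∑ k, ρ k) *
                ∑ k ∈ Finset.univ.filter (fun k : Fin (n+1) => (k : ℕ) ≤ (j : ℕ)), ρ k
            else
              (ρ i.castSucc / ∑ k, ρ k) *
                ∑ k ∈ Finset.univ.filter (fun k : Fin (n+1) => (j : ℕ) < (k : ℕ)), ρ k) • W j‖ ^ 2 := by
  refine ⟨4 * (n + 1) / c ^ 2, by positivity, fun E _ _ ρ hρ _ W => ?_⟩
  have sum_ρ_pos : 0 < ∑ i, ρ i :=
    Finset.sum_pos (fun i _ => hc.trans_le (hρ i)) Finset.univ_nonempty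
  exact stmt_5_general hc (fun i => (hρ i).trans (le_abs_self _)) sum_ρ_pos.ne' W
end

section
/- Let N ≥ 2, and for i = 1,…,N let γ_i > 1, m_i > 0 and z_i > 0 be real numbers; set a_i := (γ_i/m_i)·z_i^{γ_i−2}. Let M be the N×N real matrix with M_{i,i} = a_i and M_{i,i+1} = −a_{i+1} for i = 1,…,N−1, M_{N,j} = 1 for all j, and all other entries zero. Then det M = Σ_{i=1}^N Π_{j≠i} a_j > 0. In particular det M ≠ 0 for every z in the open positive orthant of ℝ^N. -/
/-!
Only two entries of the first column can be nonzero: `a 0` at the top and `w 0` at the bottom of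
a general last row `w`. Deleting the first row and column leaves a matrix of the same shape, while
deleting the last row and first column leaves a lower triangular one with diagonal
`-a 1, …, -a n`, whose signs cancel against the cofactor sign `(-1) ^ n`. Laplace expansion along
the first column therefore gives `D (a, w) = w 0 * a 1 ⋯ a n + a 0 * D (tail a, tail w)`, a
recursion that needs no division.
-/

section CommRing

open Finset Matrix

variable {R : Type*} [CommRing R] {n : ℕ}

/-- The square matrix whose rows are the weighted differences `a i • e i - a (i + 1) • e (i + 1)`
of consecutive standard basis vectors, followed by an arbitrary last row `w`. With `w = 1` it is
the Jacobian matrix `DG` of the paper. -/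
def borderedDifferenceMatrix (a w : Fin (n + 1) → R) : Matrix (Fin (n + 1)) (Fin (n + 1)) R :=
  of <| Fin.snoc (α := fun _ ↦ Fin (n + 1) → R)
    (fun i : Fin n ↦ Pi.single i.castSucc (a i.castSucc) - Pi.single i.succ (a i.succ)) w

namespace borderedDifferenceMatrix

variable (a w : Fin (n + 1) → R)

lemma apply_last (j : Fin (n + 1)) : borderedDifferenceMatrix a w (Fin.last n) j = w j := by
  simp [borderedDifferenceMatrix]

lemma apply_castSucc (i : Fin n) (j : Fin (n + 1)) :
    borderedDifferenceMatrix a w i.castSucc j =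
      if j = i.castSucc then a i.castSucc else if j = i.succ then -a j else 0 := by
  have hne : i.castSucc ≠ i.succ := Fin.castSucc_lt_succ.ne
  by_cases hdiag : j = i.castSucc
  · subst hdiag
    simp [borderedDifferenceMatrix, hne]
  · by_cases hsuper : j = i.succ
    · subst hsuper
      simp [borderedDifferenceMatrix, hne.symm]
    · simp [borderedDifferenceMatrix, hdiag, hsuper]

lemma submatrix_succ_succ (a w : Fin (n + 2) → R) :
    (borderedDifferenceMatrix a w).submatrix Fin.succ Fin.succ =
      borderedDifferenceMatrix (Fin.tail a) (Fin.tail w) := by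
  ext i j
  cases i using Fin.lastCases with
  | last => simp only [submatrix_apply, Fin.succ_last, apply_last, Fin.tail]
  | cast i =>
    rw [submatrix_apply, Fin.succ_castSucc, apply_castSucc, apply_castSucc, ← Fin.succ_castSucc]
    simp only [Fin.succ_inj, Fin.tail]

lemma det_submatrix_castSucc_succ :
    ((borderedDifferenceMatrix a w).submatrix Fin.castSucc Fin.succ).det =
      ∏ i : Fin n, -a i.succ := by
  rw [det_of_isLowerTriangular]
  · simp [apply_castSucc, Fin.castSucc_lt_succ.ne']
  · intro i j (hij : i < j)
    have hdiag : j.succ ≠ i.castSucc := ((Fin.castSucc_lt_castSucc_iff.2 hij).trans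
      Fin.castSucc_lt_succ).ne'
    simp [apply_castSucc, hdiag, hij.ne']

lemma det_succ (a w : Fin (n + 2) → R) :
    (borderedDifferenceMatrix a w).det =
      w 0 * ∏ i : Fin (n + 1), a i.succ +
        a 0 * (borderedDifferenceMatrix (Fin.tail a) (Fin.tail w)).det := by
  have hfirst : borderedDifferenceMatrix a w 0 0 = a 0 := by
    simpa using apply_castSucc a w 0 0
  have hmiddle (i : Fin n) : borderedDifferenceMatrix a w i.castSucc.succ 0 = 0 := by
    rw [Fin.succ_castSucc, apply_castSucc]
    simp [Fin.ext_iff]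
  have hsign : (-1 : R) ^ (n + 1) * (-1) ^ (n + 1) = 1 := by
    simp only [← mul_pow, neg_one_mul, neg_neg, one_pow]
  rw [det_succ_column_zero, Fin.sum_univ_succ, Fin.sum_univ_castSucc]
  simp only [hfirst, hmiddle, Fin.succ_last, apply_last, Fin.succAbove_zero, submatrix_succ_succ,
    Fin.succAbove_last, det_submatrix_castSucc_succ, prod_neg, card_univ, Fintype.card_fin,
    Fin.val_zero, Fin.val_last, Nat.succ_eq_add_one, pow_zero, one_mul, mul_zero, zero_mul,
    sum_const_zero, zero_add]
  linear_combination (w 0 * ∏ i : Fin (n + 1), a i.succ) * hsign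

lemma det_eq_sum_prod_succAbove :
    (borderedDifferenceMatrix a w).det = ∑ i, w i * ∏ j, a (i.succAbove j) := by
  induction n with
  | zero => simpa using apply_last a w 0
  | succ n ih =>
    rw [det_succ, ih, Fin.sum_univ_succ (n := n + 1), mul_sum]
    simp only [Fin.succAbove_zero, Fin.prod_univ_succ (n := n) (fun j ↦ a (Fin.succAbove _ j)),
      Fin.succ_succAbove_zero, Fin.succ_succAbove_succ, Fin.tail, mul_left_comm]

theorem det_eq_sum_prod_erase :
    (borderedDifferenceMatrix a w).det = ∑ i, w i * ∏ j ∈ univ.erase i, a j := by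
  simp only [det_eq_sum_prod_succAbove, ← compl_singleton, ← Fin.image_succAbove_univ,
    prod_image Fin.succAbove_right_injective.injOn]

variable {a w} in
theorem det_pos [PartialOrder R] [IsStrictOrderedRing R] (ha : ∀ i, 0 < a i) (hw : 0 < w) :
    0 < (borderedDifferenceMatrix a w).det := by
  obtain ⟨hw_nonneg, i, hi⟩ := Pi.lt_def.1 hw
  rw [det_eq_sum_prod_succAbove]
  have hprod (i : Fin (n + 1)) : 0 < ∏ j, a (i.succAbove j) := prod_pos fun j _ ↦ ha _
  exact sum_pos' (fun i _ ↦ mul_nonneg (hw_nonneg i) (hprod i).le)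
    ⟨i, mem_univ i, mul_pos hi (hprod i)⟩

variable {a w} in
lemma eq_of_apply_eq_ite {M : Matrix (Fin (n + 1)) (Fin (n + 1)) R}
    (hM : ∀ i j, M i j =
      if (i : ℕ) = n then w j
      else if j = i then a i
      else if (j : ℕ) = (i : ℕ) + 1 then -(a j)
      else 0) :
    M = borderedDifferenceMatrix a w := by
  ext i j
  rw [hM]
  cases i using Fin.lastCases with
  | last => rw [apply_last, Fin.val_last, if_pos rfl]
  | cast i =>
    simp only [apply_castSucc, Fin.val_castSucc, i.isLt.ne, if_false, Fin.ext_iff, Fin.val_succ]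

end borderedDifferenceMatrix

end CommRing

theorem stmt_7_general {R : Type*} [CommRing R] [PartialOrder R] [IsStrictOrderedRing R] {N : ℕ}
    {a w : Fin N → R} (ha : ∀ i, 0 < a i) (hw : 0 < w) {M : Matrix (Fin N) (Fin N) R}
    (hM : ∀ i j, M i j =
      if (i : ℕ) = N - 1 then w j
      else if j = i then a i
      else if (j : ℕ) = (i : ℕ) + 1 then -(a j)
      else 0) :
    (M.det = ∑ i, w i * ∏ j ∈ Finset.univ.erase i, a j) ∧ 0 < M.det := by
  cases N with
  | zero => exact absurd (Subsingleton.elim 0 w) hw.ne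
  | succ n =>
    rw [borderedDifferenceMatrix.eq_of_apply_eq_ite hM]
    exact ⟨borderedDifferenceMatrix.det_eq_sum_prod_erase a w,
      borderedDifferenceMatrix.det_pos ha hw⟩

/-- For γᵢ > 1, mᵢ > 0, zᵢ > 0 and aᵢ := (γᵢ/mᵢ)·zᵢ^{γᵢ−2}, the N×N matrix M
with Mᵢᵢ = aᵢ, M_{i,i+1} = −a_{i+1}, last row all ones and zeros elsewhere satisfies
det M = Σᵢ Π_{j≠i} aⱼ > 0; in particular det M ≠ 0 on the open positive orthant. -/
theorem stmt_7 (N : ℕ) (hN : 2 ≤ N) (γ m z : Fin N → ℝ)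
    (hγ : ∀ i, 1 < γ i) (hm : ∀ i, 0 < m i) (hz : ∀ i, 0 < z i)
    (a : Fin N → ℝ) (ha : ∀ i, a i = (γ i / m i) * z i ^ (γ i - 2))
    (M : Matrix (Fin N) (Fin N) ℝ)
    (hM : ∀ i j, M i j =
      if (i : ℕ) = N - 1 then 1
      else if j = i then a i
      else if (j : ℕ) = (i : ℕ) + 1 then -(a j)
      else 0) :
    (M.det = ∑ i, ∏ j ∈ Finset.univ.erase i, a j) ∧ 0 < M.det := by
  have : NeZero N := ⟨by omega⟩
  have ha_pos (i : Fin N) : 0 < a i := by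
    rw [ha]
    exact mul_pos (div_pos (zero_lt_one.trans (hγ i)) (hm i)) (Real.rpow_pos_of_pos (hz i) _)
  simpa only [Pi.one_apply, one_mul] using stmt_7_general ha_pos (zero_lt_one' (Fin N → ℝ)) hM
end

section
/- Let N ≥ 2, and for i = 1,…,N let c_i > 0 and α_i > 0 be real numbers. Define G : (0,∞)^N → ℝ^N by G(z₁,…,z_N) = (c₁ z₁^{α₁} − c₂ z₂^{α₂}, c₂ z₂^{α₂} − c₃ z₃^{α₃}, …, c_{N−1} z_{N−1}^{α_{N−1}} − c_N z_N^{α_N}, z₁ + z₂ + ⋯ + z_N). Then G is injective on the open positive orthant {z ∈ ℝ^N : z₁,…,z_N > 0}. -/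
/-!
Write `f i x = c i * x ^ α i`. If `G z = G w`, equality of the difference coordinates says that
`f i (z i) - f i (w i)` is the same number `d` for every `i`. As each `f i` is strictly increasing,
the sign of `d` decides whether `z ≤ w` or `w ≤ z` in all coordinates simultaneously, and comparable
vectors with equal coordinate sums coincide.
-/

theorem le_or_ge_of_forall_sub_eq {ι A : Type*} {M : ι → Type*} [∀ i, LinearOrder (M i)]
    [AddGroup A] [LinearOrder A] [AddRightMono A] {f : ∀ i, M i → A} {s : ∀ i, Set (M i)}
    (hf : ∀ i, StrictMonoOn (f i) (s i)) {z w : ∀ i, M i} (hz : ∀ i, z i ∈ s i)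
    (hw : ∀ i, w i ∈ s i) {d : A} (hd : ∀ i, f i (z i) - f i (w i) = d) :
    z ≤ w ∨ w ≤ z := by
  rcases le_total d 0 with d_nonpos | d_nonneg
  · left
    intro i
    have hle : f i (z i) ≤ f i (w i) := sub_nonpos.1 ((hd i).trans_le d_nonpos)
    exact ((hf i).le_iff_le (hz i) (hw i)).1 hle
  · right
    intro i
    have hle : f i (w i) ≤ f i (z i) := sub_nonneg.1 (d_nonneg.trans_eq (hd i).symm)
    exact ((hf i).le_iff_le (hw i) (hz i)).1 hle

theorem eq_of_le_of_sum_eq {ι M : Type*} [Fintype ι] [AddCommMonoid M] [PartialOrder M]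
    [IsOrderedCancelAddMonoid M] {z w : ι → M} (hle : z ≤ w) (hsum : ∑ i, z i = ∑ i, w i) :
    z = w :=
  hle.eq_of_not_lt fun hlt ↦ (Fintype.sum_strictMono hlt).ne hsum

theorem eq_apply_zero_of_castSucc_eq_succ {X : Type*} {n : ℕ} {g : Fin (n + 1) → X}
    (hg : ∀ i : Fin n, g i.castSucc = g i.succ) (i : Fin (n + 1)) : g i = g 0 := by
  induction i using Fin.induction with
  | zero => rfl
  | succ i ih => exact (hg i).symm.trans ih

theorem strictMonoOn_const_mul_rpow {c α : ℝ} (hc : 0 < c) (hα : 0 < α) :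
    StrictMonoOn (fun x ↦ c * x ^ α) (Set.Ici 0) :=
  (strictMono_mul_left_of_pos hc).comp_strictMonoOn
    (Real.strictMonoOn_rpow_Ici_of_exponent_pos hα)

theorem stmt_9_general {n : ℕ} {M : Type*} [AddCommGroup M] [LinearOrder M] [IsOrderedAddMonoid M]
    {f : Fin (n + 1) → M → M} {s : Fin (n + 1) → Set M} (hf : ∀ i, StrictMonoOn (f i) (s i))
    {G : (Fin (n + 1) → M) → (Fin (n + 1) → M)}
    (hG : ∀ z i, G z i =
      if (i : ℕ) = n then ∑ j, z j else f i (z i) - f (i + 1) (z (i + 1))) :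
    Set.InjOn G (Set.univ.pi s) := by
  intro z hz w hw hzw
  have hsum : ∑ j, z j = ∑ j, w j := by
    simpa only [hG, Fin.val_last, if_true] using congrFun hzw (Fin.last n)
  have hstep (i : Fin n) : f i.castSucc (z i.castSucc) - f i.castSucc (w i.castSucc) =
      f i.succ (z i.succ) - f i.succ (w i.succ) := by
    have hcoord := congrFun hzw i.castSucc
    simp only [hG, Fin.val_castSucc, i.isLt.ne, if_false, Fin.coeSucc_eq_succ] at hcoord
    exact sub_eq_sub_iff_sub_eq_sub.1 hcoord
  have hconst := eq_apply_zero_of_castSucc_eq_succ (g := fun i ↦ f i (z i) - f i (w i)) hstep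
  rcases le_or_ge_of_forall_sub_eq hf (fun i ↦ hz i trivial) (fun i ↦ hw i trivial) hconst
    with hle | hge
  · exact eq_of_le_of_sum_eq hle hsum
  · exact (eq_of_le_of_sum_eq hge hsum.symm).symm

/-- For N = n+1 ≥ 2, cᵢ > 0 and αᵢ > 0, the map
G(z) = (c₁z₁^{α₁} − c₂z₂^{α₂}, …, c_{N−1}z_{N−1}^{α_{N−1}} − c_N z_N^{α_N}, z₁+⋯+z_N)
is injective on the open positive orthant. (Here the last coordinate is index n, and for
i with (i : ℕ) ≠ n the i-th coordinate is cᵢ zᵢ^{αᵢ} − c_{i+1} z_{i+1}^{α_{i+1}}.) -/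
theorem stmt_9 (n : ℕ) (hn : 1 ≤ n) (c α : Fin (n+1) → ℝ)
    (hc : ∀ i, 0 < c i) (hα : ∀ i, 0 < α i)
    (G : (Fin (n+1) → ℝ) → (Fin (n+1) → ℝ))
    (hG : ∀ z i, G z i =
      if (i : ℕ) = n then ∑ j, z j
      else c i * z i ^ α i - c (i + 1) * z (i + 1) ^ α (i + 1)) :
    ∀ z w : Fin (n+1) → ℝ, (∀ i, 0 < z i) → (∀ i, 0 < w i) → G z = G w → z = w := by
  intro z w hz hw
  exact stmt_9_general (fun i ↦ strictMonoOn_const_mul_rpow (hc i) (hα i)) hG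
    (fun i _ ↦ (hz i).le) (fun i _ ↦ (hw i).le)
end

section
/- Let 0 < t₁ ≤ 1 and let z : [0, t₁] → ℝ be differentiable with 0 < z(t) < 1 for all t ∈ [0, t₁], satisfying z′(t) = z(t)·(1 − ln z(t)) for all t ∈ [0, t₁]. Then for every t ∈ [0, t₁], z(t) ≤ e^t · z(0)^{1−t}. -/
/-!
Along `z' ≤ z * (ε - K * log z)` the logarithm satisfies the linear inequality
`(log z)' ≤ -K * log z + ε`, so Grönwall bounds `log z` by the solution of the linear equation.
For `0 ≤ K` and `K * log (z a) ≤ ε` that solution is concave, hence lies below its tangent line at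
`a`; exponentiating the tangent line gives the power bound.
-/

open Set

theorem gronwallBound_le_tangent {δ K ε : ℝ} (hK : K ≤ 0) (hslope : 0 ≤ K * δ + ε) (x : ℝ) :
    gronwallBound δ K ε x ≤ δ + (K * δ + ε) * x := by
  rcases hK.eq_or_lt with rfl | hK
  · simp [gronwallBound_K0]
  have hexp : (Real.exp (K * x) - 1) / K ≤ x := by
    rw [div_le_iff_of_neg hK]
    linarith [Real.add_one_le_exp (K * x)]
  calc
    gronwallBound δ K ε x = δ + (K * δ + ε) * ((Real.exp (K * x) - 1) / K) := by
      rw [gronwallBound_of_K_ne_0 hK.ne]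
      field [hK.ne]
    _ ≤ δ + (K * δ + ε) * x := by gcongr

theorem le_gronwallBound_of_deriv_right_le {f f' : ℝ → ℝ} {δ K ε a b : ℝ}
    (hf : ContinuousOn f (Icc a b))
    (hf' : ∀ x ∈ Ico a b, HasDerivWithinAt f (f' x) (Ici x) x)
    (ha : f a ≤ δ) (bound : ∀ x ∈ Ico a b, f' x ≤ K * f x + ε) :
    ∀ x ∈ Icc a b, f x ≤ gronwallBound δ K ε (x - a) :=
  le_gronwallBound_of_liminf_deriv_right_le hf
    (fun x hx _ hr => (hf' x hx).liminf_right_slope_le hr) ha bound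

theorem log_le_gronwallBound_of_deriv_right_le {z z' : ℝ → ℝ} {K ε a b : ℝ}
    (hcont : ContinuousOn z (Icc a b)) (hpos : ∀ t ∈ Icc a b, 0 < z t)
    (hz' : ∀ t ∈ Ico a b, HasDerivWithinAt z (z' t) (Ici t) t)
    (bound : ∀ t ∈ Ico a b, z' t ≤ z t * (K * Real.log (z t) + ε)) :
    ∀ t ∈ Icc a b, Real.log (z t) ≤ gronwallBound (Real.log (z a)) K ε (t - a) := by
  have hpos' : ∀ t ∈ Ico a b, 0 < z t := fun t ht => hpos t (Ico_subset_Icc_self ht)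
  exact le_gronwallBound_of_deriv_right_le (hcont.log fun t ht => (hpos t ht).ne')
    (fun t ht => (hz' t ht).log (hpos' t ht).ne') le_rfl
    fun t ht => (div_le_iff₀' (hpos' t ht)).2 (bound t ht)

theorem stmt_11_general {z z' : ℝ → ℝ} {K ε a b : ℝ} (hK : 0 ≤ K)
    (hcont : ContinuousOn z (Icc a b)) (hpos : ∀ t ∈ Icc a b, 0 < z t)
    (hz' : ∀ t ∈ Ico a b, HasDerivWithinAt z (z' t) (Ici t) t)
    (bound : ∀ t ∈ Ico a b, z' t ≤ z t * (ε - K * Real.log (z t)))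
    (hinit : K * Real.log (z a) ≤ ε) :
    ∀ t ∈ Icc a b, z t ≤ Real.exp (ε * (t - a)) * z a ^ (1 - K * (t - a)) := by
  intro t ht
  have hza : 0 < z a := hpos a ⟨le_rfl, ht.1.trans ht.2⟩
  have hlog : Real.log (z t) ≤ gronwallBound (Real.log (z a)) (-K) ε (t - a) :=
    log_le_gronwallBound_of_deriv_right_le hcont hpos hz'
      (fun s hs => (bound s hs).trans_eq (by ring)) t ht
  have htangent := gronwallBound_le_tangent (neg_nonpos.2 hK)
    (by linarith : 0 ≤ -K * Real.log (z a) + ε) (t - a)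
  calc
    z t ≤ Real.exp (Real.log (z a) + (-K * Real.log (z a) + ε) * (t - a)) :=
      (Real.log_le_iff_le_exp (hpos t ht)).1 (hlog.trans htangent)
    _ = Real.exp (ε * (t - a)) * z a ^ (1 - K * (t - a)) := by
      rw [Real.rpow_def_of_pos hza, ← Real.exp_add]
      ring_nf

/-- If 0 < t₁ ≤ 1 and z : [0,t₁] → (0,1) is differentiable with
z′(t) = z(t)·(1 − ln z(t)) on [0,t₁], then z(t) ≤ eᵗ·z(0)^{1−t} for all t ∈ [0,t₁]. -/
theorem stmt_11 (t₁ : ℝ) (ht₁ : 0 < t₁) (ht₁' : t₁ ≤ 1) (z : ℝ → ℝ)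
    (hz : ∀ t ∈ Set.Icc (0 : ℝ) t₁, 0 < z t ∧ z t < 1)
    (hz' : ∀ t ∈ Set.Icc (0 : ℝ) t₁, HasDerivAt z (z t * (1 - Real.log (z t))) t) :
    ∀ t ∈ Set.Icc (0 : ℝ) t₁, z t ≤ Real.exp t * z 0 ^ (1 - t) := by
  intro t ht
  have hz₀ := hz 0 ⟨le_rfl, ht₁.le⟩
  simpa using stmt_11_general (K := 1) (ε := 1) zero_le_one
    (HasDerivAt.continuousOn hz') (fun s hs => (hz s hs).1)
    (fun s hs => (hz' s (Ico_subset_Icc_self hs)).hasDerivWithinAt) (fun s _ => by simp)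
    (by linarith [Real.log_neg hz₀.1 hz₀.2]) t ht
end
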